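/- There exists a constant C depending only on d such that the following holds. Let 0 < δ ≤ 1 and let K be a c-packed polygonal curve in ℝ^d. For each edge e of K define the trough trough(e,δ) = { (x, z) ∈ ℝ^d × ℝ : dist(x, e) ≤ 4z ≤ 8·δ^{−1}·|e| }, where dist(x,e) is the Euclidean distance from x to the segment e and |e| is the length of e. Then the collection T = { trough(e,δ) : e an edge of K } is (C·c·δ^{−1})-low-density in ℝ^{d+1}: for every axis-parallel hypercube H in ℝ^{d+1} of side length s, the number of edges e of K such that trough(e,δ) intersects H and the smallest axis-parallel hypercube enclosing trough(e,δ) has side length at least s is at most C·c·δ^{−1}. -/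

import Mathlib

open scoped BigOperators

noncomputable section

/-- Points of `d`-dimensional Euclidean space. -/
abbrev Pt (d : ℕ) := EuclideanSpace ℝ (Fin d)

/-- A reparametrization: a continuous nondecreasing surjection of `[0,1]` onto itself
(equivalently, continuous and monotone on `[0,1]` with `α 0 = 0` and `α 1 = 1`). -/
structure IsReparam (α : ℝ → ℝ) : Prop where
  continuousOn : ContinuousOn α (Set.Icc 0 1)
  monotoneOn : MonotoneOn α (Set.Icc 0 1)
  map_zero : α 0 = 0
  map_one : α 1 = 1

/-- The Fréchet distance between two curves parametrized over `[0,1]`. -/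
noncomputable def frechetDist {d : ℕ} (P Q : ℝ → Pt d) : ℝ :=
  sInf {r : ℝ | ∃ α β : ℝ → ℝ, IsReparam α ∧ IsReparam β ∧
    r = ⨆ t : Set.Icc (0:ℝ) 1, dist (P (α (t : ℝ))) (Q (β (t : ℝ)))}

/-- The straight-line curve from `a` to `b`, parametrized over `[0,1]`. -/
def seg {d : ℕ} (a b : Pt d) : ℝ → Pt d := fun t => (1 - t) • a + t • b

/-- The subcurve `K|[s,t]`, reparametrized over `[0,1]`. -/
def subcurve {d : ℕ} (K : ℝ → Pt d) (s t : ℝ) : ℝ → Pt d := fun u => K (s + u * (t - s))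

/-- `K` is affine-linear on `[a,b]` (constant if `a = b`, by `div_zero`). -/
def AffineOn {d : ℕ} (K : ℝ → Pt d) (a b : ℝ) : Prop :=
  ∀ x ∈ Set.Icc a b, K x = K a + ((x - a) / (b - a)) • (K b - K a)

/-- Concatenation of two curves parametrized over `[0,1]`. -/
noncomputable def concat {d : ℕ} (A B : ℝ → Pt d) : ℝ → Pt d :=
  fun t => if t ≤ 1 / 2 then A (2 * t) else B (2 * t - 1)

/-- The point at parameter `t ∈ [0,1]` on the segment with endpoints `e.1`, `e.2`. -/
def interpEdge {d : ℕ} (e : Pt d × Pt d) (t : ℝ) : Pt d := (1 - t) • e.1 + t • e.2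

/-- The edges of a polygonal curve given by its list of vertices. -/
def edgesOf {d : ℕ} (l : List (Pt d)) : List (Pt d × Pt d) := l.zip l.tail

/-- The length of the part of segment `e` inside the closed ball `B(q,r)`. -/
noncomputable def segBallLength {d : ℕ} (e : Pt d × Pt d) (q : Pt d) (r : ℝ) : ℝ :=
  (MeasureTheory.volume
      {t : ℝ | t ∈ Set.Icc (0:ℝ) 1 ∧ interpEdge e t ∈ Metric.closedBall q r}).toReal
    * dist e.1 e.2

/-- A polygonal curve with vertex list `l` is `c`-packed: for every point `q` and radius
`r > 0`, the total length of the curve inside `B(q,r)` is at most `c * r`. -/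
def CPacked {d : ℕ} (c : ℝ) (l : List (Pt d)) : Prop :=
  ∀ (q : Pt d) (r : ℝ), 0 < r →
    ((edgesOf l).map (fun e => segBallLength e q r)).sum ≤ c * r

/-- Greedy scan step of the simplification: starting from the current vertex `cur`, mark
the first vertex at distance at least `μ` from `cur` and continue from it. -/
noncomputable def greedyScan {d : ℕ} (μ : ℝ) : Pt d → List (Pt d) → List (Pt d)
  | _, [] => []
  | cur, p :: rest =>
      if μ ≤ dist cur p then p :: greedyScan μ p rest else greedyScan μ cur rest

open Classical in
/-- The greedy `μ`-simplification of a polygonal curve given by its vertex list: mark the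
first vertex, greedily scan forward, and always mark the last vertex. -/
noncomputable def simplList {d : ℕ} (μ : ℝ) : List (Pt d) → List (Pt d)
  | [] => []
  | p :: rest =>
      let s := p :: greedyScan μ p rest
      match rest.getLast? with
      | none => s
      | some last => if s.getLast? = some last then s else s ++ [last]

/-- `P : [0,1] → ℝ^d` is the polygonal curve through the vertex list `l`, with the uniform
parametrization placing vertex `i` at parameter `i / (|l| - 1)`. -/
def IsPolygonalParamL {d : ℕ} (l : List (Pt d)) (P : ℝ → Pt d) : Prop :=
  (∀ i, i < l.length → P ((i : ℝ) / ((l.length : ℝ) - 1)) = l.getD i 0) ∧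
  ∀ i, i + 1 < l.length →
    AffineOn P ((i : ℝ) / ((l.length : ℝ) - 1)) (((i : ℝ) + 1) / ((l.length : ℝ) - 1))

/-- `Q : [0,1] → ℝ^d` is the polygonal curve with vertices `q 0, …, q (m-1)`, with the
uniform parametrization placing vertex `i` at parameter `i / (m - 1)`. -/
def IsPolygonalParam {d : ℕ} (m : ℕ) (q : ℕ → Pt d) (Q : ℝ → Pt d) : Prop :=
  (∀ i, i < m → Q ((i : ℝ) / ((m : ℝ) - 1)) = q i) ∧
  ∀ i, i + 1 < m →
    AffineOn Q ((i : ℝ) / ((m : ℝ) - 1)) (((i : ℝ) + 1) / ((m : ℝ) - 1))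

/-- The Euclidean distance from a point `x` to the segment `e`. -/
noncomputable def segDist {d : ℕ} (e : Pt d × Pt d) (x : Pt d) : ℝ :=
  sInf {r : ℝ | ∃ t ∈ Set.Icc (0:ℝ) 1, r = dist x (interpEdge e t)}

/-- The trough object of an edge `e`, a subset of `ℝ^d × ℝ`. -/
def trough {d : ℕ} (e : Pt d × Pt d) (δ : ℝ) : Set (Pt d × ℝ) :=
  {p | segDist e p.1 ≤ 4 * p.2 ∧ 4 * p.2 ≤ 8 * δ⁻¹ * dist e.1 e.2}

/-- The axis-parallel hypercube in `ℝ^d × ℝ` with lower corner `(a, b)` and side length `s`. -/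
def cube {d : ℕ} (a : Pt d) (b s : ℝ) : Set (Pt d × ℝ) :=
  {p | (∀ i, p.1 i ∈ Set.Icc (a i) (a i + s)) ∧ p.2 ∈ Set.Icc b (b + s)}

end

/-!
Let `H` be a cube of side `s` with lower corner `(a, b)` and put `m = max b s`. A trough meeting `H`
has a point at height at least `b`, so its edge `e` satisfies `δ b ≤ 2 |e|`; a trough of size at
least `s` lies in a cube of side `18 |e| / δ`, so `δ s ≤ 18 |e|`. Hence `|e| ≥ δ m / 18`. The common
point of the trough and `H` has height at most `2 m`, so `e` comes within `8 m` of it, and `e`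
spends length at least `δ m / 18` in the ball of radius `(√d + 9) m` around `a`. Packedness bounds
the total of these lengths by `c (√d + 9) m`, which leaves room for at most `18 (√d + 9) c / δ`
edges.
-/

section Segments

variable {d : ℕ} (e : Pt d × Pt d)

lemma interpEdge_eq_lineMap (t : ℝ) : interpEdge e t = AffineMap.lineMap e.1 e.2 t :=
  (AffineMap.lineMap_apply_module e.1 e.2 t).symm

lemma dist_interpEdge_interpEdge (t u : ℝ) :
    dist (interpEdge e t) (interpEdge e u) = dist t u * dist e.1 e.2 := by
  simp only [interpEdge_eq_lineMap, dist_lineMap_lineMap]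

lemma continuous_interpEdge : Continuous (interpEdge e) := by
  unfold interpEdge
  fun_prop

lemma exists_segDist_eq_dist (x : Pt d) :
    ∃ t ∈ Set.Icc (0 : ℝ) 1, segDist e x = dist x (interpEdge e t) := by
  have hcompact : IsCompact ((fun t => dist x (interpEdge e t)) '' Set.Icc 0 1) :=
    isCompact_Icc.image (continuous_const.dist (continuous_interpEdge e))
  obtain ⟨t, ht, h⟩ := hcompact.sInf_mem ((Set.nonempty_Icc.2 zero_le_one).image _)
  exact ⟨t, ht, by simp only [segDist, h, Set.image, eq_comm]⟩

lemma segBallLength_nonneg (q : Pt d) (r : ℝ) : 0 ≤ segBallLength e q r :=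
  mul_nonneg ENNReal.toReal_nonneg dist_nonneg

variable {e} {q : Pt d} {r t : ℝ}

lemma mul_dist_le_segBallLength {w : ℝ} (hw : w ∈ Set.Icc (0 : ℝ) 1) (ht : t ∈ Set.Icc (0 : ℝ) 1)
    (hr : dist q (interpEdge e t) + w * dist e.1 e.2 ≤ r) :
    w * dist e.1 e.2 ≤ segBallLength e q r := by
  obtain ⟨hw0, hw1⟩ := hw
  obtain ⟨ht0, ht1⟩ := ht
  set T := {u : ℝ | u ∈ Set.Icc (0 : ℝ) 1 ∧ interpEdge e u ∈ Metric.closedBall q r}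
  -- The homothety with centre `t` and ratio `w` maps `[0, 1]` onto this interval.
  have hsub : Set.Icc (t * (1 - w)) (t * (1 - w) + w) ⊆ T := by
    rintro u ⟨hu0, hu1⟩
    have hut : dist u t ≤ w := by
      rw [Real.dist_eq, abs_le]
      constructor <;> nlinarith
    refine ⟨⟨by nlinarith, by nlinarith⟩, ?_⟩
    calc dist (interpEdge e u) q
        ≤ dist q (interpEdge e t) + dist (interpEdge e u) (interpEdge e t) := by
          rw [add_comm, dist_comm q]
          exact dist_triangle _ _ _
      _ ≤ dist q (interpEdge e t) + w * dist e.1 e.2 := by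
          rw [dist_interpEdge_interpEdge]
          gcongr
      _ ≤ r := hr
  have hfinite : MeasureTheory.volume T ≠ ⊤ :=
    MeasureTheory.measure_ne_top_of_subset (fun _ hu => hu.1) (by simp)
  have hlength : w ≤ (MeasureTheory.volume T).toReal := by
    have hmono := ENNReal.toReal_mono hfinite (MeasureTheory.measure_mono hsub)
    rwa [Real.volume_Icc, add_sub_cancel_left, ENNReal.toReal_ofReal hw0] at hmono
  exact mul_le_mul_of_nonneg_right hlength dist_nonneg

lemma le_segBallLength {h : ℝ} (h0 : 0 ≤ h) (he : h ≤ dist e.1 e.2) (ht : t ∈ Set.Icc (0 : ℝ) 1)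
    (hr : dist q (interpEdge e t) + h ≤ r) : h ≤ segBallLength e q r := by
  have hcancel : h / dist e.1 e.2 * dist e.1 e.2 = h :=
    div_mul_cancel_of_imp fun hL => le_antisymm (he.trans_eq hL) h0
  have hw : h / dist e.1 e.2 ∈ Set.Icc (0 : ℝ) 1 :=
    ⟨div_nonneg h0 dist_nonneg, div_le_one_of_le₀ he dist_nonneg⟩
  rw [← hcancel] at hr ⊢
  exact mul_dist_le_segBallLength hw ht hr

end Segments

lemma dist_le_sqrt_card_mul {ι : Type*} [Fintype ι] {β : ι → Type*}
    [∀ i, SeminormedAddCommGroup (β i)] {x y : PiLp 2 β} {r : ℝ} (hr : 0 ≤ r)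
    (h : ∀ i, dist (x i) (y i) ≤ r) : dist x y ≤ √(Fintype.card ι) * r := by
  have hsum : ∑ i, dist (x i) (y i) ^ 2 ≤ Fintype.card ι * r ^ 2 := by
    rw [← nsmul_eq_mul]
    exact Finset.sum_le_card_nsmul _ _ _ fun i _ => pow_le_pow_left₀ dist_nonneg (h i) 2
  calc dist x y = √(∑ i, dist (x i) (y i) ^ 2) := PiLp.dist_eq_of_L2 x y
    _ ≤ √(Fintype.card ι * r ^ 2) := Real.sqrt_le_sqrt hsum
    _ = √(Fintype.card ι) * r := by rw [Real.sqrt_mul (Nat.cast_nonneg _), Real.sqrt_sq hr]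

lemma dist_fst_le_of_mem_cube {d : ℕ} {a : Pt d} {b s : ℝ} {p : Pt d × ℝ} (hp : p ∈ cube a b s) :
    dist a p.1 ≤ √d * s := by
  obtain ⟨hfst, hsnd⟩ := hp
  have hs : 0 ≤ s := by linarith [hsnd.1, hsnd.2]
  have hcoord : ∀ i, dist (a i) (p.1 i) ≤ s := fun i => by
    rw [Real.dist_eq, abs_le]
    constructor <;> linarith [(hfst i).1, (hfst i).2]
  simpa only [Fintype.card_fin] using dist_le_sqrt_card_mul hs hcoord

/-- The size of `A ⊆ ℝ^d × ℝ` is at least `s`: every axis-parallel hypercube enclosing `A` has side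
length at least `s`. This says `s ≤ size A` without assuming that a smallest enclosing hypercube
exists. -/
def SizeAtLeast {d : ℕ} (s : ℝ) (A : Set (Pt d × ℝ)) : Prop :=
  ∀ (a : Pt d) (b s' : ℝ), A ⊆ cube a b s' → s ≤ s'

section Troughs

variable {d : ℕ} {e : Pt d × Pt d} {δ : ℝ}

lemma exists_dist_interpEdge_le_of_mem_trough {p : Pt d × ℝ} (hp : p ∈ trough e δ) :
    ∃ t ∈ Set.Icc (0 : ℝ) 1, dist p.1 (interpEdge e t) ≤ 4 * p.2 := by
  obtain ⟨t, ht, hdist⟩ := exists_segDist_eq_dist e p.1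
  exact ⟨t, ht, hdist ▸ hp.1⟩

lemma snd_le_of_mem_trough {p : Pt d × ℝ} (hp : p ∈ trough e δ) :
    p.2 ≤ 2 * (dist e.1 e.2 / δ) := by
  have h := hp.2
  rw [mul_assoc, inv_mul_eq_div] at h
  linarith

lemma trough_subset_cube (hδ : 0 < δ) (hδ1 : δ ≤ 1) :
    trough e δ ⊆
      cube (WithLp.toLp 2 fun i => e.1 i - 9 * (dist e.1 e.2 / δ)) 0
        (18 * (dist e.1 e.2 / δ)) := by
  rintro p hp
  obtain ⟨t, ht, hdist⟩ := exists_dist_interpEdge_le_of_mem_trough hp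
  have hheight := snd_le_of_mem_trough hp
  have hlen : dist e.1 e.2 ≤ dist e.1 e.2 / δ := le_div_self dist_nonneg hδ hδ1
  have hstart : dist (interpEdge e t) e.1 ≤ dist e.1 e.2 := by
    rw [interpEdge_eq_lineMap, dist_lineMap_left, Real.norm_of_nonneg ht.1]
    exact mul_le_of_le_one_left dist_nonneg ht.2
  have hfst : dist p.1 e.1 ≤ 9 * (dist e.1 e.2 / δ) := by
    linarith [dist_triangle p.1 (interpEdge e t) e.1]
  refine ⟨fun i => ?_, ?_, ?_⟩
  · have hcoord : |p.1 i - e.1 i| ≤ 9 * (dist e.1 e.2 / δ) :=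
      (PiLp.norm_apply_le (p.1 - e.1) i).trans (dist_eq_norm p.1 e.1 ▸ hfst)
    rw [abs_le] at hcoord
    constructor <;> dsimp only <;> linarith [hcoord.1, hcoord.2]
  · linarith [dist_nonneg (x := p.1) (y := interpEdge e t)]
  · linarith [dist_nonneg (x := e.1) (y := e.2)]

variable {a : Pt d} {b s : ℝ}

lemma mul_max_div_le_dist (hδ : 0 < δ) (hδ1 : δ ≤ 1) (hmeet : (trough e δ ∩ cube a b s).Nonempty)
    (hsize : SizeAtLeast s (trough e δ)) : δ * max b s / 18 ≤ dist e.1 e.2 := by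
  obtain ⟨p, hp, hcube⟩ := hmeet
  have hb : b ≤ 18 * (dist e.1 e.2 / δ) := by
    have hlen : 0 ≤ dist e.1 e.2 / δ := div_nonneg dist_nonneg hδ.le
    linarith [hcube.2.1, snd_le_of_mem_trough hp]
  have hs : s ≤ 18 * (dist e.1 e.2 / δ) := hsize _ _ _ (trough_subset_cube hδ hδ1)
  have hmax := max_le hb hs
  rw [← mul_div_assoc, le_div_iff₀ hδ] at hmax
  linarith

lemma mul_max_div_le_segBallLength (hδ : 0 < δ) (hδ1 : δ ≤ 1) (hs : 0 < s)
    (hmeet : (trough e δ ∩ cube a b s).Nonempty) (hsize : SizeAtLeast s (trough e δ)) :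
    δ * max b s / 18 ≤ segBallLength e a ((√d + 9) * max b s) := by
  have hlen := mul_max_div_le_dist hδ hδ1 hmeet hsize
  obtain ⟨p, hp, hcube⟩ := hmeet
  obtain ⟨t, ht, hnear⟩ := exists_dist_interpEdge_le_of_mem_trough hp
  have hm : 0 < max b s := lt_max_of_lt_right hs
  refine le_segBallLength (by positivity) hlen ht ?_
  have hcorner : dist a p.1 ≤ √d * max b s :=
    (dist_fst_le_of_mem_cube hcube).trans (by gcongr; exact le_max_right b s)
  have hheight : p.2 ≤ 2 * max b s := by
    linarith [hcube.2.2, le_max_left b s, le_max_right b s]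
  have hshort : δ * max b s ≤ max b s := mul_le_of_le_one_left hm.le hδ1
  linarith [dist_triangle a p.1 (interpEdge e t)]

end Troughs

lemma list_sum_map_eq_sum_range_getD {α M : Type*} [AddCommMonoid M] (f : α → M) (z : α)
    (l : List α) : (l.map f).sum = ∑ i ∈ Finset.range l.length, f (l.getD i z) := by
  rw [← Fin.sum_univ_fun_getElem, Finset.sum_range]
  simp only [Fin.is_lt, List.getD_eq_getElem]

/-- A finite family of segments is `c`-packed: in every closed ball `B(q,r)` it has total length at
most `c * r`. This is `CPacked` without the requirement that the segments form a curve. -/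
def IsPackedFamily {d : ℕ} {ι : Type*} (c : ℝ) (S : Finset ι) (e : ι → Pt d × Pt d) : Prop :=
  ∀ (q : Pt d) (r : ℝ), 0 < r → ∑ i ∈ S, segBallLength (e i) q r ≤ c * r

lemma CPacked.isPackedFamily {d : ℕ} {c : ℝ} {l : List (Pt d)} (h : CPacked c l) :
    IsPackedFamily c (Finset.range (edgesOf l).length) fun i => (edgesOf l).getD i (0, 0) :=
  fun q r hr => (list_sum_map_eq_sum_range_getD _ _ _).symm.trans_le (h q r hr)

open Classical in
/-- A finite family of subsets of `ℝ^d × ℝ` is `k`-low-density: at most `k` members of size at least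
`s` meet any given axis-parallel hypercube of side length `s`. Members are counted by index, so
repeated sets count with multiplicity. -/
def IsLowDensity {d : ℕ} {ι : Type*} (k : ℝ) (S : Finset ι) (A : ι → Set (Pt d × ℝ)) : Prop :=
  ∀ (a : Pt d) (b s : ℝ), 0 < s →
    ((S.filter fun i => (A i ∩ cube a b s).Nonempty ∧ SizeAtLeast s (A i)).card : ℝ) ≤ k

theorem trough_low_density_general {d : ℕ} {ι : Type*} {c δ : ℝ} (hδ : 0 < δ) (hδ1 : δ ≤ 1)
    {S : Finset ι} {e : ι → Pt d × Pt d} (hpacked : IsPackedFamily c S e) :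
    IsLowDensity (18 * (√d + 9) * c / δ) S fun i => trough (e i) δ := by
  classical
  intro a b s hs
  have hm : 0 < max b s := lt_max_of_lt_right hs
  set F := S.filter fun i =>
    (trough (e i) δ ∩ cube a b s).Nonempty ∧ SizeAtLeast s (trough (e i) δ)
  have hcharge : F.card * (δ * max b s / 18) ≤ c * ((√d + 9) * max b s) := by
    calc F.card * (δ * max b s / 18)
        = F.card • (δ * max b s / 18) := (nsmul_eq_mul _ _).symm
      _ ≤ ∑ i ∈ F, segBallLength (e i) a ((√d + 9) * max b s) :=
          Finset.card_nsmul_le_sum _ _ _ fun i hi =>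
            have ⟨_, hmeet, hsize⟩ := Finset.mem_filter.1 hi
            mul_max_div_le_segBallLength hδ hδ1 hs hmeet hsize
      _ ≤ ∑ i ∈ S, segBallLength (e i) a ((√d + 9) * max b s) :=
          Finset.sum_le_sum_of_subset_of_nonneg (Finset.filter_subset _ _)
            fun i _ _ => segBallLength_nonneg (e i) a _
      _ ≤ c * ((√d + 9) * max b s) := hpacked a _ (by positivity)
  rw [le_div_iff₀ hδ]
  exact le_of_mul_le_mul_right (by linarith) hm

open Classical in
/-- There is a constant `C` depending only on `d` such that: for every
`0 < δ ≤ 1` and every `c`-packed polygonal curve `K` in `ℝ^d` (vertex list `l`), the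
collection of troughs of the edges of `K` is `(C·c·δ⁻¹)`-low-density in `ℝ^{d+1}`: for every
axis-parallel hypercube `H` of side length `s > 0`, the number of edges `e` such that
`trough(e,δ)` meets `H` and every enclosing axis-parallel hypercube of `trough(e,δ)` has
side length at least `s`, is at most `C·c·δ⁻¹`. -/
theorem trough_low_density (d : ℕ) :
    ∃ C : ℝ, 0 < C ∧ ∀ (c δ : ℝ), 0 < δ → δ ≤ 1 →
      ∀ (l : List (Pt d)), CPacked c l →
        ∀ (a : Pt d) (b s : ℝ), 0 < s →
          (((Finset.range (edgesOf l).length).filter (fun i =>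
              (trough ((edgesOf l).getD i (0, 0)) δ ∩ cube a b s).Nonempty ∧
              ∀ (a' : Pt d) (b' s' : ℝ),
                trough ((edgesOf l).getD i (0, 0)) δ ⊆ cube a' b' s' → s ≤ s')).card : ℝ)
            ≤ C * c / δ :=
  ⟨18 * (√d + 9), by positivity, fun _ _ hδ hδ1 _ hl =>
    trough_low_density_general hδ hδ1 hl.isPackedFamily⟩
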